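/- Let 1 ≤ p < ∞, let y_1, …, y_K ∈ M_N, and let u : M_N → M_N be the map u(x) = Σ_{k=1}^K y_k x y_k^*. Assume ‖u(x)‖_{S_p} ≤ ‖x‖_{S_p} for all x ∈ M_N. Let n ≥ 1, let α, β ∈ M_N, let g ∈ M_N ⊗ M_n have operator norm at most 1 on ℂ^N ⊗ ℂ^n, and set x = (α ⊗ I_n)·g·(β ⊗ I_n). Then ‖(u ⊗ id_{M_n})(x)‖_{S_p^N[M_n]} ≤ ‖u(αα^*)‖_{S_p}^{1/2} · ‖u(β^*β)‖_{S_p}^{1/2}. (The key estimate in the proof of Lemma 2.3.) -/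

import Mathlib

open scoped Kronecker ENNReal Classical ComplexOrder
open Matrix

noncomputable section

/-- The operator norm (`S_∞` norm) of a complex matrix, acting on Euclidean space. -/
def opNorm {ι : Type} [Fintype ι] [DecidableEq ι] (a : Matrix ι ι ℂ) : ℝ :=
  ‖LinearMap.toContinuousLinearMap (Matrix.toEuclideanLin a)‖

/-- The Schatten `p`-norm of a complex matrix: the `ℓ^p` norm of its singular values
(the square roots of the eigenvalues of `aᴴ * a`); for `p = ∞` it is the operator norm. -/
def schattenNorm {ι : Type} [Fintype ι] [DecidableEq ι] (p : ℝ≥0∞) (a : Matrix ι ι ℂ) : ℝ :=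
  if p = ∞ then opNorm a
  else (∑ i, Real.sqrt ((Matrix.posSemidef_conjTranspose_mul_self a).isHermitian.eigenvalues i) ^ p.toReal)
      ^ (1 / p.toReal)

/-- Pisier's vector-valued Schatten norm `‖x‖_{S_p^N[M_n]}` on `M_N ⊗ M_n`:
the infimum of `‖a‖_{S_{2p}} ‖y‖_{S_∞} ‖b‖_{S_{2p}}` over factorizations
`x = (a ⊗ 1) · y · (b ⊗ 1)`. -/
def pisierNorm (p : ℝ≥0∞) {N n : ℕ} (x : Matrix (Fin N × Fin n) (Fin N × Fin n) ℂ) : ℝ :=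
  sInf { r | ∃ (a b : Matrix (Fin N) (Fin N) ℂ)
      (y : Matrix (Fin N × Fin n) (Fin N × Fin n) ℂ),
      x = (a ⊗ₖ (1 : Matrix (Fin n) (Fin n) ℂ)) * y * (b ⊗ₖ (1 : Matrix (Fin n) (Fin n) ℂ)) ∧
      r = schattenNorm (2 * p) a * opNorm y * schattenNorm (2 * p) b }

/-- The amplification `u ⊗ id_{M_n} : M_N ⊗ M_n → M_m ⊗ M_n` of a map `u : M_N → M_m`,
acting as `u` on each `M_n`-block entry. -/
def amp {N m n : ℕ} (u : Matrix (Fin N) (Fin N) ℂ → Matrix (Fin m) (Fin m) ℂ)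
    (x : Matrix (Fin N × Fin n) (Fin N × Fin n) ℂ) : Matrix (Fin m × Fin n) (Fin m × Fin n) ℂ :=
  Matrix.of fun ik jl => u (Matrix.of fun i j => x (i, ik.2) (j, jl.2)) ik.1 jl.1

/-- The amplification `id_{M_n} ⊗ u : M_n ⊗ M_N → M_n ⊗ M_m` of a map `u : M_N → M_m`. -/
def ampLeft {n N m : ℕ} (u : Matrix (Fin N) (Fin N) ℂ → Matrix (Fin m) (Fin m) ℂ)
    (x : Matrix (Fin n × Fin N) (Fin n × Fin N) ℂ) : Matrix (Fin n × Fin m) (Fin n × Fin m) ℂ :=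
  Matrix.of fun ki lj => u (Matrix.of fun i j => x (ki.1, i) (lj.1, j)) ki.2 lj.2

/-- The trace pairing `T : M_k ⊗ M_k → ℂ`, with `T(a ⊗ b) = tr(ᵗa·b)`; writing
`z` as a `k×k` matrix of blocks `z_{ij} ∈ M_k`, `T(z) = Σ_{i,j} (z_{ij})_{ij}`. -/
def tracePair {k : ℕ} (z : Matrix (Fin k × Fin k) (Fin k × Fin k) ℂ) : ℂ :=
  ∑ i : Fin k, ∑ j : Fin k, z (i, i) (j, j)

/-- A map `u : M_N → M_m` is completely positive if all its amplifications
`id_{M_n} ⊗ u` preserve positive semidefiniteness. -/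
def CompletelyPositive {N m : ℕ}
    (u : Matrix (Fin N) (Fin N) ℂ → Matrix (Fin m) (Fin m) ℂ) : Prop :=
  ∀ (n : ℕ) (x : Matrix (Fin n × Fin N) (Fin n × Fin N) ℂ),
    x.PosSemidef → (ampLeft u x).PosSemidef

/-- The regular norm (relative to `p`) of `u : M_N → M_m`: the supremum in `[0,∞]`
over `n ≥ 1` of the norms of the amplifications `u ⊗ id_{M_n}` from
`(M_N ⊗ M_n, ‖·‖_{S_p^N[M_n]})` to `(M_m ⊗ M_n, ‖·‖_{S_p^m[M_n]})`. -/
def regNorm (p : ℝ≥0∞) {N m : ℕ}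
    (u : Matrix (Fin N) (Fin N) ℂ → Matrix (Fin m) (Fin m) ℂ) : ℝ≥0∞ :=
  ⨆ (n : ℕ) (x : Matrix (Fin N × Fin (n + 1)) (Fin N × Fin (n + 1)) ℂ)
    (_ : pisierNorm p x ≤ 1), ENNReal.ofReal (pisierNorm p (amp u x))

/-- Pisier's norm `ρ_p` on `M_n ⊗ M_m` (with `q` the conjugate exponent `p'`):
the infimum of `‖γ‖_{S_{2p}} ‖α‖_{S_{2p'}} ‖g‖_{S_∞} ‖δ‖_{S_{2p}} ‖β‖_{S_{2p'}}`
over factorizations `a = (γ ⊗ α) · g · (δ ⊗ β)`. -/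
def rho (p q : ℝ≥0∞) {n m : ℕ} (a : Matrix (Fin n × Fin m) (Fin n × Fin m) ℂ) : ℝ :=
  sInf { r | ∃ (γ δ : Matrix (Fin n) (Fin n) ℂ) (α β : Matrix (Fin m) (Fin m) ℂ)
      (g : Matrix (Fin n × Fin m) (Fin n × Fin m) ℂ),
      a = (γ ⊗ₖ α) * g * (δ ⊗ₖ β) ∧
      r = schattenNorm (2 * p) γ * schattenNorm (2 * q) α * opNorm g *
          schattenNorm (2 * p) δ * schattenNorm (2 * q) β }

/-- The amplification `u ⊗ id_{M_n}` of a map `u` defined only on a subspace `S ⊆ M_N`,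
applied to an element of `M_N ⊗ M_n` all of whose `M_N`-valued block entries lie in `S`. -/
def ampOn {N m n : ℕ} (S : Submodule ℂ (Matrix (Fin N) (Fin N) ℂ))
    (u : S →ₗ[ℂ] Matrix (Fin m) (Fin m) ℂ)
    (x : Matrix (Fin N × Fin n) (Fin N × Fin n) ℂ)
    (h : ∀ k l : Fin n, (Matrix.of fun i j => x (i, k) (j, l)) ∈ S) :
    Matrix (Fin m × Fin n) (Fin m × Fin n) ℂ :=
  Matrix.of fun ik jl => u ⟨Matrix.of fun i j => x (i, ik.2) (j, jl.2), h ik.2 jl.2⟩ ik.1 jl.1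

end

/-!
Put `A k = y k * α` and `B k = y k * βᴴ`, so that `(u ⊗ id) x = ∑ k, (A k ⊗ 1) g (B k ⊗ 1)ᴴ`,
`u (α αᴴ) = ∑ k, A k (A k)ᴴ` and `u (βᴴ β) = ∑ k, B k (B k)ᴴ`. The polar decomposition of the block
row `(A k)ₖ` gives `A k = a V k` with `a² = ∑ k, A k (A k)ᴴ` and `(V k)ₖ` a contractive row;
likewise `B k = b W k`. Then `(u ⊗ id) x = (a ⊗ 1) z (b ⊗ 1)`, where
`z = ∑ k, (V k ⊗ 1) g (W k ⊗ 1)ᴴ` has norm at most `‖g‖`, being the product of a contractive row,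
a direct sum of copies of `g`, and a contractive column. Finally `‖a‖_{2p}² = ‖a²‖_p` and
`‖b‖_{2p}² = ‖b²‖_p`.
-/

section BlockRow

variable {R ι κ μ ν : Type*}

/-- The block row `(V₁ ⋯ V_K)`, turning sums `∑ k, V k * (W k)ᴴ` into single matrix products;
the column index is the pair (block, column inside the block). -/
def blockRow : (κ → Matrix ι μ R) ≃ Matrix ι (κ × μ) R where
  toFun V := of fun i kj => V kj.1 i kj.2
  invFun M k := of fun i j => M i (k, j)
  left_inv _ := rfl
  right_inv _ := rfl

@[simp]
theorem blockRow_apply (V : κ → Matrix ι μ R) (i : ι) (kj : κ × μ) :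
    blockRow V i kj = V kj.1 i kj.2 :=
  rfl

theorem mul_blockRow [Fintype ν] [NonUnitalNonAssocSemiring R]
    (a : Matrix ι ν R) (V : κ → Matrix ν μ R) :
    a * blockRow V = blockRow fun k => a * V k :=
  rfl

variable [Fintype κ] [Fintype μ] [Semiring R] [StarRing R]

theorem blockRow_mul_one_kronecker_mul_conjTranspose [Fintype ν] [DecidableEq κ]
    (V : κ → Matrix ι μ R) (g : Matrix μ ν R) (W : κ → Matrix ι ν R) :
    blockRow V * ((1 : Matrix κ κ R) ⊗ₖ g) * (blockRow W)ᴴ = ∑ k, V k * g * (W k)ᴴ := by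
  ext i j
  simp [mul_apply, Matrix.sum_apply, Fintype.sum_prod_type, one_apply]

theorem blockRow_mul_conjTranspose (V : κ → Matrix ι μ R) :
    blockRow V * (blockRow V)ᴴ = ∑ k, V k * (V k)ᴴ := by
  simpa using blockRow_mul_one_kronecker_mul_conjTranspose V 1 V

end BlockRow

section KroneckerOne

variable {R ι κ μ ν : Type*} [Fintype ν] [DecidableEq ν] [Fintype μ] [CommSemiring R]

theorem mul_kronecker_one {η : Type*} (a : Matrix ι μ R) (b : Matrix μ η R) :
    (a * b) ⊗ₖ (1 : Matrix ν ν R) = (a ⊗ₖ (1 : Matrix ν ν R)) * (b ⊗ₖ (1 : Matrix ν ν R)) := by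
  rw [← mul_kronecker_mul, one_mul]

theorem kronecker_one_mul_sum_mul_kronecker_one [StarRing R] [Fintype ι] [Fintype κ]
    (a b : Matrix ι ι R) (V W : κ → Matrix ι μ R) (g : Matrix (μ × ν) (μ × ν) R) :
    (a ⊗ₖ (1 : Matrix ν ν R)) * (∑ k, (V k ⊗ₖ (1 : Matrix ν ν R)) * g *
        (W k ⊗ₖ (1 : Matrix ν ν R))ᴴ) * (bᴴ ⊗ₖ (1 : Matrix ν ν R)) =
      ∑ k, ((a * V k) ⊗ₖ (1 : Matrix ν ν R)) * g * ((b * W k) ⊗ₖ (1 : Matrix ν ν R))ᴴ := by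
  simp only [mul_kronecker_one, conjTranspose_mul, conjTranspose_kronecker, conjTranspose_one,
    Matrix.mul_sum, Matrix.sum_mul, Matrix.mul_assoc]

end KroneckerOne

section FunctionalCalculus

variable {𝕜 ι : Type*} [RCLike 𝕜] [Fintype ι] [DecidableEq ι]

theorem cfc_mul_cfc (S : Matrix ι ι 𝕜) (f g : ℝ → ℝ) :
    cfc f S * cfc g S = cfc (fun t => f t * g t) S :=
  (cfc_mul f g S (S.finite_real_spectrum.continuousOn f)
    (S.finite_real_spectrum.continuousOn g)).symm

theorem sum_eigenvalues_cfc {A : Matrix ι ι 𝕜} (hA : A.IsHermitian) (f F : ℝ → ℝ)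
    {B : Matrix ι ι 𝕜} (hB : B.IsHermitian) (h : B = cfc f A) :
    ∑ i, F (hB.eigenvalues i) = ∑ i, F (f (hA.eigenvalues i)) := by
  subst h
  have hroots := hB.roots_charpoly_eq_eigenvalues
  rw [hA.charpoly_cfc_eq, Polynomial.roots_prod _ _
    (by simp [Finset.prod_ne_zero_iff, Polynomial.X_sub_C_ne_zero])] at hroots
  simpa using (congrArg (fun s : Multiset 𝕜 => (s.map fun z => F (RCLike.re z)).sum) hroots).symm

end FunctionalCalculus

section L2OpNorm

open scoped Matrix.Norms.L2Operator

variable {ι κ μ ν : Type*} [Fintype ι] [Fintype κ] [DecidableEq κ]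
  [Fintype μ] [DecidableEq μ] [Fintype ν] [DecidableEq ν]

theorem l2_opNorm_one_kronecker_le (g : Matrix μ μ ℂ) : ‖(1 : Matrix κ κ ℂ) ⊗ₖ g‖ ≤ ‖g‖ :=
  let φ : Matrix μ μ ℂ →⋆ₙₐ[ℂ] Matrix (κ × μ) (κ × μ) ℂ :=
    { toFun := fun g => 1 ⊗ₖ g
      map_smul' := fun c g => kronecker_smul c 1 g
      map_zero' := kronecker_zero 1
      map_add' := kronecker_add 1
      map_mul' := fun g h => by rw [← mul_kronecker_mul, one_mul]
      map_star' := fun g => by simp [star_eq_conjTranspose, conjTranspose_kronecker] }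
  NonUnitalStarAlgHom.norm_apply_le φ g

theorem l2_opNorm_kronecker_one_le [DecidableEq ι] (a : Matrix ι ι ℂ) :
    ‖a ⊗ₖ (1 : Matrix ν ν ℂ)‖ ≤ ‖a‖ :=
  let φ : Matrix ι ι ℂ →⋆ₙₐ[ℂ] Matrix (ι × ν) (ι × ν) ℂ :=
    { toFun := fun a => a ⊗ₖ 1
      map_smul' := fun c a => smul_kronecker c a 1
      map_zero' := zero_kronecker 1
      map_add' := fun a b => add_kronecker a b 1
      map_mul' := fun a b => by rw [← mul_kronecker_mul, one_mul]
      map_star' := fun a => by simp [star_eq_conjTranspose, conjTranspose_kronecker] }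
  NonUnitalStarAlgHom.norm_apply_le φ a

theorem l2_opNorm_self_mul_conjTranspose [DecidableEq ι] (V : Matrix ι μ ℂ) :
    ‖V * Vᴴ‖ = ‖V‖ ^ 2 := by
  rw [sq, ← l2_opNorm_conjTranspose V, ← l2_opNorm_conjTranspose_mul_self,
    conjTranspose_conjTranspose]

theorem l2_opNorm_blockRow_kronecker_one_le (V : κ → Matrix ι μ ℂ) :
    ‖blockRow fun k => V k ⊗ₖ (1 : Matrix ν ν ℂ)‖ ≤ ‖blockRow V‖ := by
  have hgram : (∑ k, (V k ⊗ₖ (1 : Matrix ν ν ℂ)) * (V k ⊗ₖ (1 : Matrix ν ν ℂ))ᴴ) =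
      (∑ k, V k * (V k)ᴴ) ⊗ₖ (1 : Matrix ν ν ℂ) := by
    simp only [conjTranspose_kronecker, conjTranspose_one, ← mul_kronecker_mul, one_mul]
    ext ⟨i, s⟩ ⟨j, t⟩
    simp only [Matrix.sum_apply, kronecker_apply, Finset.sum_mul]
  rw [← sq_le_sq₀ (norm_nonneg _) (norm_nonneg _), ← l2_opNorm_self_mul_conjTranspose,
    ← l2_opNorm_self_mul_conjTranspose, blockRow_mul_conjTranspose, blockRow_mul_conjTranspose,
    hgram]
  exact l2_opNorm_kronecker_one_le _

theorem l2_opNorm_sum_mul_mul_conjTranspose_le [DecidableEq ι] (V W : κ → Matrix ι μ ℂ)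
    (g : Matrix μ μ ℂ) :
    ‖∑ k, V k * g * (W k)ᴴ‖ ≤ ‖blockRow V‖ * ‖g‖ * ‖blockRow W‖ := by
  rw [← blockRow_mul_one_kronecker_mul_conjTranspose]
  calc ‖blockRow V * ((1 : Matrix κ κ ℂ) ⊗ₖ g) * (blockRow W)ᴴ‖
      ≤ ‖blockRow V‖ * ‖(1 : Matrix κ κ ℂ) ⊗ₖ g‖ * ‖(blockRow W)ᴴ‖ :=
        (l2_opNorm_mul _ _).trans (by gcongr; exact l2_opNorm_mul _ _)
    _ ≤ ‖blockRow V‖ * ‖g‖ * ‖blockRow W‖ := by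
        rw [l2_opNorm_conjTranspose]
        gcongr
        exact l2_opNorm_one_kronecker_le g

theorem l2_opNorm_sum_kronecker_one_mul_mul_conjTranspose_le [DecidableEq ι]
    (V W : κ → Matrix ι μ ℂ) (g : Matrix (μ × ν) (μ × ν) ℂ) :
    ‖∑ k, (V k ⊗ₖ (1 : Matrix ν ν ℂ)) * g * (W k ⊗ₖ (1 : Matrix ν ν ℂ))ᴴ‖ ≤
      ‖blockRow V‖ * ‖g‖ * ‖blockRow W‖ := by
  refine (l2_opNorm_sum_mul_mul_conjTranspose_le _ _ g).trans ?_
  gcongr <;> exact l2_opNorm_blockRow_kronecker_one_le _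

open scoped MatrixOrder in
theorem exists_isHermitian_sqrt_pseudoinverse [DecidableEq ι] {S : Matrix ι ι ℂ}
    (hS : S.PosSemidef) :
    ∃ a b : Matrix ι ι ℂ, a.IsHermitian ∧ b.IsHermitian ∧ a * a = S ∧ a * b * S = S ∧
      ‖b * S * b‖ ≤ 1 := by
  have hid : cfc (fun t : ℝ => t) S = S := cfc_id' ℝ S hS.isHermitian
  have hnonneg {t : ℝ} (ht : t ∈ spectrum ℝ S) : 0 ≤ t := spectrum_nonneg_of_nonneg hS.nonneg ht
  have hsqrt {t : ℝ} (ht : t ∈ spectrum ℝ S) : √t * √t = t := Real.mul_self_sqrt (hnonneg ht)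
  -- Since `0⁻¹ = 0`, the second matrix vanishes on the kernel of `S` and inverts `√S` off it.
  refine ⟨cfc Real.sqrt S, cfc (fun t => (√t)⁻¹) S, cfc_predicate _ S, cfc_predicate _ S,
    ?_, ?_, ?_⟩
  · nth_rw 3 [← hid]
    rw [cfc_mul_cfc]
    exact cfc_congr fun t ht => hsqrt ht
  · nth_rw 3 4 [← hid]
    rw [cfc_mul_cfc, cfc_mul_cfc]
    refine cfc_congr fun t ht => ?_
    rcases (hnonneg ht).eq_or_lt with rfl | hpos
    · simp
    · simp [(Real.sqrt_pos.2 hpos).ne']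
  · nth_rw 2 [← hid]
    rw [cfc_mul_cfc, cfc_mul_cfc]
    refine norm_cfc_le zero_le_one fun t ht => ?_
    calc ‖(√t)⁻¹ * t * (√t)⁻¹‖ = ‖t * t⁻¹‖ := by
          rw [mul_comm _ t, mul_assoc, ← mul_inv, hsqrt ht]
      _ ≤ 1 := by
          have ht0 := hnonneg ht
          rw [Real.norm_of_nonneg (by positivity)]
          exact mul_inv_le_one

theorem exists_isHermitian_mul_contraction (A : Matrix ι μ ℂ) :
    ∃ (a : Matrix ι ι ℂ) (V : Matrix ι μ ℂ),
      a.IsHermitian ∧ a * a = A * Aᴴ ∧ a * V = A ∧ ‖V‖ ≤ 1 := by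
  obtain ⟨a, b, ha, hb, haa, hab, hnorm⟩ :=
    exists_isHermitian_sqrt_pseudoinverse (posSemidef_self_mul_conjTranspose A)
  refine ⟨a, b * A, ha, haa, ?_, ?_⟩
  · have hker : (a * b - 1) * (A * Aᴴ) = 0 := by rw [Matrix.sub_mul, hab, one_mul, sub_self]
    rwa [mul_self_mul_conjTranspose_eq_zero, Matrix.sub_mul, Matrix.one_mul, sub_eq_zero,
      Matrix.mul_assoc] at hker
  · rw [← sq_le_one_iff₀ (norm_nonneg _), ← l2_opNorm_self_mul_conjTranspose, conjTranspose_mul,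
      hb.eq]
    simpa only [Matrix.mul_assoc] using hnorm

theorem exists_isHermitian_mul_blockRow_contraction (A : κ → Matrix ι μ ℂ) :
    ∃ (a : Matrix ι ι ℂ) (V : κ → Matrix ι μ ℂ), a.IsHermitian ∧ a * a = ∑ k, A k * (A k)ᴴ ∧
      (∀ k, A k = a * V k) ∧ ‖blockRow V‖ ≤ 1 := by
  obtain ⟨a, M, ha, haa, haM, hM⟩ := exists_isHermitian_mul_contraction (blockRow A)
  obtain ⟨V, rfl⟩ := blockRow.surjective M
  rw [mul_blockRow, blockRow.apply_eq_iff_eq] at haM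
  exact ⟨a, V, ha, haa.trans (blockRow_mul_conjTranspose A), fun k => (congrFun haM k).symm, hM⟩

end L2OpNorm

section SchattenNorm

variable {ι : Type} [Fintype ι] [DecidableEq ι] {p : ℝ≥0∞}

theorem opNorm_nonneg (a : Matrix ι ι ℂ) : 0 ≤ opNorm a :=
  norm_nonneg _

theorem schattenNorm_nonneg (p : ℝ≥0∞) (a : Matrix ι ι ℂ) : 0 ≤ schattenNorm p a := by
  unfold schattenNorm
  split_ifs
  · exact opNorm_nonneg a
  · positivity

open scoped Matrix.Norms.L2Operator in
theorem opNorm_conjTranspose_mul_self (a : Matrix ι ι ℂ) : opNorm (aᴴ * a) = opNorm a ^ 2 :=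
  (l2_opNorm_conjTranspose_mul_self a).trans (sq _).symm

theorem schattenNorm_rpow (hp : p ≠ 0) (hptop : p ≠ ∞) (a : Matrix ι ι ℂ) :
    schattenNorm p a ^ p.toReal =
      ∑ i, √((posSemidef_conjTranspose_mul_self a).isHermitian.eigenvalues i) ^ p.toReal := by
  rw [schattenNorm, if_neg hptop, one_div,
    Real.rpow_inv_rpow (by positivity) (ENNReal.toReal_ne_zero.2 ⟨hp, hptop⟩)]

theorem schattenNorm_rpow_of_posSemidef (hp : p ≠ 0) (hptop : p ≠ ∞) {H : Matrix ι ι ℂ}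
    (hH : H.PosSemidef) :
    schattenNorm p H ^ p.toReal = ∑ i, hH.isHermitian.eigenvalues i ^ p.toReal := by
  have hsq : Hᴴ * H = cfc (fun t : ℝ => t ^ 2) H := by
    rw [hH.isHermitian.eq, ← sq]
    exact (cfc_pow_id H 2 hH.isHermitian).symm
  rw [schattenNorm_rpow hp hptop,
    sum_eigenvalues_cfc hH.isHermitian (fun t => t ^ 2) (fun t => √t ^ p.toReal) _ hsq]
  simp only [Real.sqrt_sq (hH.eigenvalues_nonneg _)]

theorem schattenNorm_two_mul_sq (hp : p ≠ 0) (a : Matrix ι ι ℂ) :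
    schattenNorm (2 * p) a ^ 2 = schattenNorm p (aᴴ * a) := by
  by_cases hptop : p = ∞
  · simp [hptop, schattenNorm, opNorm_conjTranspose_mul_self]
  have hH := posSemidef_conjTranspose_mul_self a
  have h2p : (2 * p).toReal = 2 * p.toReal := by simp
  have hroot (t : ℝ) (ht : 0 ≤ t) : √t ^ (2 * p.toReal) = t ^ p.toReal := by
    rw [Real.rpow_mul (Real.sqrt_nonneg t), Real.rpow_two, Real.sq_sqrt ht]
  rw [← Real.rpow_left_inj (sq_nonneg _) (schattenNorm_nonneg _ _)
    (ENNReal.toReal_ne_zero.2 ⟨hp, hptop⟩)]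
  calc (schattenNorm (2 * p) a ^ 2) ^ p.toReal
      = schattenNorm (2 * p) a ^ (2 * p).toReal := by
        rw [h2p, Real.rpow_mul (schattenNorm_nonneg _ _), Real.rpow_two]
    _ = ∑ i, hH.isHermitian.eigenvalues i ^ p.toReal := by
        rw [schattenNorm_rpow (by simpa using hp) (ENNReal.mul_ne_top (by simp) hptop), h2p]
        exact Finset.sum_congr rfl fun i _ => hroot _ (hH.eigenvalues_nonneg i)
    _ = schattenNorm p (aᴴ * a) ^ p.toReal := (schattenNorm_rpow_of_posSemidef hp hptop hH).symm

theorem schattenNorm_two_mul (hp : p ≠ 0) (a : Matrix ι ι ℂ) :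
    schattenNorm (2 * p) a = √(schattenNorm p (aᴴ * a)) := by
  rw [← schattenNorm_two_mul_sq hp, Real.sqrt_sq (schattenNorm_nonneg _ _)]

end SchattenNorm

section Amplification

variable {N m n : ℕ} {κ : Type*} [Fintype κ]

theorem amp_sum_mul_mul_conjTranspose (y : κ → Matrix (Fin m) (Fin N) ℂ)
    (x : Matrix (Fin N × Fin n) (Fin N × Fin n) ℂ) :
    amp (fun x => ∑ k, y k * x * (y k)ᴴ) x =
      ∑ k, (y k ⊗ₖ (1 : Matrix (Fin n) (Fin n) ℂ)) * x *
        (y k ⊗ₖ (1 : Matrix (Fin n) (Fin n) ℂ))ᴴ := by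
  ext ⟨i, s⟩ ⟨j, t⟩
  simp [amp, mul_apply, Matrix.sum_apply, Fintype.sum_prod_type, one_apply, apply_ite]

theorem amp_kronecker_one_mul_mul_kronecker_one {μ : Type*} [Fintype μ]
    (y : κ → Matrix (Fin m) (Fin N) ℂ) (α : Matrix (Fin N) μ ℂ)
    (g : Matrix (μ × Fin n) (μ × Fin n) ℂ) (β : Matrix μ (Fin N) ℂ) :
    amp (fun x => ∑ k, y k * x * (y k)ᴴ) ((α ⊗ₖ (1 : Matrix (Fin n) (Fin n) ℂ)) * g *
        (β ⊗ₖ (1 : Matrix (Fin n) (Fin n) ℂ))) =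
      ∑ k, ((y k * α) ⊗ₖ (1 : Matrix (Fin n) (Fin n) ℂ)) * g *
        ((y k * βᴴ) ⊗ₖ (1 : Matrix (Fin n) (Fin n) ℂ))ᴴ := by
  rw [amp_sum_mul_mul_conjTranspose]
  simp only [mul_kronecker_one, conjTranspose_mul, conjTranspose_kronecker,
    conjTranspose_conjTranspose, conjTranspose_one, Matrix.mul_assoc]

end Amplification

section PisierNorm

variable {N m n : ℕ} {κ : Type*} {μ : Type} [Fintype κ] [Fintype μ] [DecidableEq μ]
  {p : ℝ≥0∞}

theorem pisierNorm_kronecker_one_mul_mul_le (p : ℝ≥0∞) (a b : Matrix (Fin N) (Fin N) ℂ)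
    (y : Matrix (Fin N × Fin n) (Fin N × Fin n) ℂ) :
    pisierNorm p ((a ⊗ₖ (1 : Matrix (Fin n) (Fin n) ℂ)) * y *
        (b ⊗ₖ (1 : Matrix (Fin n) (Fin n) ℂ))) ≤
      schattenNorm (2 * p) a * opNorm y * schattenNorm (2 * p) b := by
  refine csInf_le ⟨0, ?_⟩ ⟨a, b, y, rfl, rfl⟩
  rintro _ ⟨a, b, y, -, rfl⟩
  exact mul_nonneg (mul_nonneg (schattenNorm_nonneg _ _) (opNorm_nonneg _))
    (schattenNorm_nonneg _ _)

open scoped Matrix.Norms.L2Operator in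
theorem pisierNorm_sum_kronecker_one_mul_mul_conjTranspose_le (hp : p ≠ 0)
    (A B : κ → Matrix (Fin N) μ ℂ) (g : Matrix (μ × Fin n) (μ × Fin n) ℂ) :
    pisierNorm p (∑ k, (A k ⊗ₖ (1 : Matrix (Fin n) (Fin n) ℂ)) * g *
        (B k ⊗ₖ (1 : Matrix (Fin n) (Fin n) ℂ))ᴴ) ≤
      √(schattenNorm p (∑ k, A k * (A k)ᴴ)) * opNorm g *
        √(schattenNorm p (∑ k, B k * (B k)ᴴ)) := by
  obtain ⟨a, V, ha, haa, hV, hV_norm⟩ := exists_isHermitian_mul_blockRow_contraction A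
  obtain ⟨b, W, hb, hbb, hW, hW_norm⟩ := exists_isHermitian_mul_blockRow_contraction B
  set z := ∑ k, (V k ⊗ₖ (1 : Matrix (Fin n) (Fin n) ℂ)) * g *
    (W k ⊗ₖ (1 : Matrix (Fin n) (Fin n) ℂ))ᴴ
  have hz : opNorm z ≤ opNorm g := calc
    ‖z‖ ≤ ‖blockRow V‖ * ‖g‖ * ‖blockRow W‖ :=
      l2_opNorm_sum_kronecker_one_mul_mul_conjTranspose_le V W g
    _ ≤ 1 * ‖g‖ * 1 := by gcongr
    _ = ‖g‖ := by rw [one_mul, mul_one]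
  calc pisierNorm p (∑ k, (A k ⊗ₖ (1 : Matrix (Fin n) (Fin n) ℂ)) * g *
        (B k ⊗ₖ (1 : Matrix (Fin n) (Fin n) ℂ))ᴴ)
      = pisierNorm p ((a ⊗ₖ (1 : Matrix (Fin n) (Fin n) ℂ)) * z *
          (bᴴ ⊗ₖ (1 : Matrix (Fin n) (Fin n) ℂ))) := by
        simp only [z, kronecker_one_mul_sum_mul_kronecker_one, hV, hW]
    _ ≤ schattenNorm (2 * p) a * opNorm z * schattenNorm (2 * p) bᴴ :=
        pisierNorm_kronecker_one_mul_mul_le p a bᴴ z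
    _ ≤ schattenNorm (2 * p) a * opNorm g * schattenNorm (2 * p) bᴴ := by
        gcongr <;> exact schattenNorm_nonneg _ _
    _ = _ := by
        rw [schattenNorm_two_mul hp, schattenNorm_two_mul hp, conjTranspose_conjTranspose, ha.eq,
          hb.eq, haa, hbb]

theorem amp_pisierNorm_le_of_stinespring_general (hp : p ≠ 0) (y : κ → Matrix (Fin m) (Fin N) ℂ)
    (u : Matrix (Fin N) (Fin N) ℂ → Matrix (Fin m) (Fin m) ℂ)
    (hu : ∀ x, u x = ∑ k, y k * x * (y k)ᴴ) (α : Matrix (Fin N) μ ℂ) (β : Matrix μ (Fin N) ℂ)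
    (g : Matrix (μ × Fin n) (μ × Fin n) ℂ) :
    pisierNorm p (amp u ((α ⊗ₖ (1 : Matrix (Fin n) (Fin n) ℂ)) * g *
        (β ⊗ₖ (1 : Matrix (Fin n) (Fin n) ℂ)))) ≤
      √(schattenNorm p (u (α * αᴴ))) * opNorm g * √(schattenNorm p (u (βᴴ * β))) := by
  obtain rfl : u = fun x => ∑ k, y k * x * (y k)ᴴ := funext hu
  rw [amp_kronecker_one_mul_mul_kronecker_one]
  simpa only [conjTranspose_mul, conjTranspose_conjTranspose, Matrix.mul_assoc] using
    pisierNorm_sum_kronecker_one_mul_mul_conjTranspose_le hp (y · * α) (y · * βᴴ) g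

end PisierNorm

/-- The key estimate in the proof of Lemma 2.3. -/
theorem amp_pisierNorm_le_of_stinespring {N n : ℕ} (p : ℝ≥0∞) (hp : 1 ≤ p) (hptop : p ≠ ∞)
    (K : ℕ) (y : Fin K → Matrix (Fin N) (Fin N) ℂ)
    (u : Matrix (Fin N) (Fin N) ℂ → Matrix (Fin N) (Fin N) ℂ)
    (hu : ∀ x : Matrix (Fin N) (Fin N) ℂ, u x = ∑ k : Fin K, y k * x * (y k)ᴴ)
    (hb : ∀ x : Matrix (Fin N) (Fin N) ℂ, schattenNorm p (u x) ≤ schattenNorm p x)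
    (hn : 1 ≤ n) (α β : Matrix (Fin N) (Fin N) ℂ)
    (g : Matrix (Fin N × Fin n) (Fin N × Fin n) ℂ) (hg : opNorm g ≤ 1)
    (x : Matrix (Fin N × Fin n) (Fin N × Fin n) ℂ)
    (hx : x = (α ⊗ₖ (1 : Matrix (Fin n) (Fin n) ℂ)) * g * (β ⊗ₖ (1 : Matrix (Fin n) (Fin n) ℂ))) :
    pisierNorm p (amp u x) ≤
      Real.sqrt (schattenNorm p (u (α * αᴴ))) * Real.sqrt (schattenNorm p (u (βᴴ * β))) := by
  subst hx
  exact (amp_pisierNorm_le_of_stinespring_general (one_pos.trans_le hp).ne' y u hu α β g).trans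
    (by gcongr; exact mul_le_of_le_one_right (Real.sqrt_nonneg _) hg)
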